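/- If T is a self-adjoint operator in H satisfying T₀ ⊆ T ⊆ T₁ (i.e., D(T₀) ⊆ D(T) ⊆ D(T₁) and T agrees with T₁ on D(T)), then there exists a GKN set t₁,…,t_m for T₀ (m = def(T₀)) such that D(T) = {x ∈ D(T₁) : [x,tⱼ]_H = 0 for j = 1,…,m}. -/

import Mathlib

open scoped ComplexInnerProductSpace

noncomputable section

variable {H : Type*} [NormedAddCommGroup H] [InnerProductSpace ℂ H] [CompleteSpace H]

/-- The symplectic form `[x,y]_H = ⟪T₁x, y⟫_H - ⟪x, T₁y⟫_H` on the domain of `T₁`. -/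
def sympForm (T₁ : H →ₗ.[ℂ] H) (x y : T₁.domain) : ℂ :=
  ⟪T₁ x, (y : H)⟫ - ⟪(x : H), T₁ y⟫

/-- The deficiency space `{x ∈ D(T₁) | T₁ x = c • x}`; `X₊ = defSpace T₁ I`,
`X₋ = defSpace T₁ (-I)`. -/
def defSpace (T₁ : H →ₗ.[ℂ] H) (c : ℂ) : Submodule ℂ T₁.domain :=
  LinearMap.ker (T₁.toFun - c • T₁.domain.subtype)

/-- The deficiency index `def(T₀) := dim X₊`. -/
def defIndex (T₁ : H →ₗ.[ℂ] H) : ℕ :=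
  Module.finrank ℂ (defSpace T₁ Complex.I)

/-- `D(T₀)` regarded as a submodule of `D(T₁)` (assuming `T₀ ≤ T₁`); the boundary
space is `S' := D(T₁) ⧸ D0 T₀ T₁` and `φ` is `Submodule.Quotient.mk`. -/
def D0 (T₀ T₁ : H →ₗ.[ℂ] H) : Submodule ℂ T₁.domain :=
  T₀.domain.comap T₁.domain.subtype

/-- A family `t₁, …, t_d ∈ D(T₁)` is a (partial) GKN family for `T₀` if it is linearly
independent modulo `D(T₀)` and satisfies the symmetry conditions `[tᵢ,tⱼ]_H = 0`. -/
def IsGKNFamily (T₀ T₁ : H →ₗ.[ℂ] H) {d : ℕ} (t : Fin d → T₁.domain) : Prop :=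
  (∀ α : Fin d → ℂ, ((∑ j, α j • t j : T₁.domain) : H) ∈ T₀.domain → ∀ j, α j = 0) ∧
  ∀ i j, sympForm T₁ (t i) (t j) = 0

/-- A subspace `L` of the boundary space `S' = D(T₁)/D(T₀)` is Lagrangian:
`[u : v]_{S'} = 0` for all `u, v ∈ L` (expressed via representatives). -/
def IsLagrangianRep (T₀ T₁ : H →ₗ.[ℂ] H) (L : Submodule ℂ (T₁.domain ⧸ D0 T₀ T₁)) : Prop :=
  ∀ x y : T₁.domain, Submodule.Quotient.mk (p := D0 T₀ T₁) x ∈ L →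
    Submodule.Quotient.mk (p := D0 T₀ T₁) y ∈ L → sympForm T₁ x y = 0

/-- A subspace `L ⊆ S'` is complete (as a Lagrangian): if `[u : v]_{S'} = 0` for all
`v ∈ L` then `u ∈ L` (expressed via representatives, `φ` being surjective). -/
def IsCompleteRep (T₀ T₁ : H →ₗ.[ℂ] H) (L : Submodule ℂ (T₁.domain ⧸ D0 T₀ T₁)) : Prop :=
  ∀ x : T₁.domain,
    (∀ y : T₁.domain, Submodule.Quotient.mk (p := D0 T₀ T₁) y ∈ L → sympForm T₁ x y = 0) →
    Submodule.Quotient.mk (p := D0 T₀ T₁) x ∈ L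

/-!
Self-adjointness makes `T - z` surjective for every non-real `z`. With `z = i` this gives
`D(T₁) = D(T) + X₊`; with `z = -i` it lifts a basis `b` of `X₊` to vectors
`tⱼ ∈ D(T)` with `(T + i) tⱼ = bⱼ`. Since `[u, y] = -⟪u, (T₁ + i) y⟫` for `u ∈ X₊`, we get
`[u, tⱼ] = -⟪u, bⱼ⟫`, so pairing with the `tⱼ` detects exactly the `X₊`-component of a vector
in `D(T₁)`. The same identity shows that `(T₁ + i) s` is orthogonal to `X₊` for `s ∈ D(T₀)`,
which makes the `tⱼ` independent modulo `D(T₀)`.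
-/

section Shift

variable {𝕜 E : Type*} [CommRing 𝕜] [AddCommGroup E] [Module 𝕜 E]

/-- The operator `A - z`, as a linear map on the domain of `A`. For `𝕜 = ℂ` its kernel is, by
definition, `defSpace A z`. -/
def shift (A : E →ₗ.[𝕜] E) (z : 𝕜) : A.domain →ₗ[𝕜] E :=
  A.toFun - z • A.domain.subtype

theorem shift_apply (A : E →ₗ.[𝕜] E) (z : 𝕜) (x : A.domain) :
    shift A z x = A x - z • (x : E) :=
  rfl

theorem mem_ker_shift {A : E →ₗ.[𝕜] E} {z : 𝕜} {x : A.domain} :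
    x ∈ LinearMap.ker (shift A z) ↔ A x = z • (x : E) := by
  rw [LinearMap.mem_ker, shift_apply, sub_eq_zero]

theorem shift_apply_of_le {A B : E →ₗ.[𝕜] E} (hAB : A ≤ B) (z : 𝕜) (x : A.domain) :
    shift B z (Submodule.inclusion hAB.1 x) = shift A z x := by
  simp only [shift_apply, LinearPMap.apply_comp_inclusion hAB, Submodule.coe_inclusion]

end Shift

section ShiftRange

variable {𝕜 E : Type*}

theorem isClosed_range_shift [NontriviallyNormedField 𝕜] [NormedAddCommGroup E]
    [NormedSpace 𝕜 E] [CompleteSpace E] {A : E →ₗ.[𝕜] E} (hA : A.IsClosed) {z : 𝕜} {K : ℝ}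
    (hK : ∀ x : A.domain, ‖(x : E)‖ ≤ K * ‖shift A z x‖) :
    IsClosed (LinearMap.range (shift A z) : Set E) := by
  let g : A.graph →L[𝕜] E :=
    (ContinuousLinearMap.snd 𝕜 E E - z • ContinuousLinearMap.fst 𝕜 E E).comp A.graph.subtypeL
  have g_mk (x : A.domain) : g ⟨(x, A x), A.mem_graph x⟩ = shift A z x := rfl
  have : CompleteSpace A.graph := IsClosed.completeSpace_coe (hs := hA)
  have norm_apply_le (x : A.domain) : ‖A x‖ ≤ (1 + ‖z‖ * K) * ‖shift A z x‖ :=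
    calc ‖A x‖ = ‖shift A z x + z • (x : E)‖ := by rw [shift_apply, sub_add_cancel]
      _ ≤ ‖shift A z x‖ + ‖z‖ * ‖(x : E)‖ := (norm_add_le _ _).trans_eq (by rw [norm_smul])
      _ ≤ ‖shift A z x‖ + ‖z‖ * (K * ‖shift A z x‖) := by gcongr; exact hK x
      _ = (1 + ‖z‖ * K) * ‖shift A z x‖ := by ring
  have antilipschitz : AntilipschitzWith (max K (1 + ‖z‖ * K)).toNNReal g := by
    refine AddMonoidHomClass.antilipschitz_of_bound g ?_
    rintro ⟨⟨a, b⟩, hab⟩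
    obtain ⟨x, rfl, rfl⟩ := (LinearPMap.mem_graph_iff A).1 hab
    rw [g_mk]
    refine max_le ((hK x).trans ?_) ((norm_apply_le x).trans ?_) <;> gcongr <;>
      simp only [Real.coe_toNNReal', le_max_iff, le_refl, true_or, or_true]
  convert antilipschitz.isClosed_range g.uniformContinuous using 1
  ext v
  constructor
  · rintro ⟨x, rfl⟩
    exact ⟨⟨(x, A x), A.mem_graph x⟩, rfl⟩
  · rintro ⟨⟨⟨a, b⟩, hab⟩, rfl⟩
    obtain ⟨x, rfl, rfl⟩ := (LinearPMap.mem_graph_iff A).1 hab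
    exact ⟨x, rfl⟩

theorem orthogonal_range_shift [RCLike 𝕜] [NormedAddCommGroup E] [InnerProductSpace 𝕜 E]
    [CompleteSpace E] {A : E →ₗ.[𝕜] E} (hA : Dense (A.domain : Set E)) (z : 𝕜) :
    (LinearMap.range (shift A z))ᗮ =
      (LinearMap.ker (shift A.adjoint (starRingEnd 𝕜 z))).map A.adjoint.domain.subtype := by
  have inner_shift (v : E) (x : A.domain) : inner 𝕜 v (shift A z x) =
      inner 𝕜 v (A x) - inner 𝕜 (starRingEnd 𝕜 z • v) (x : E) := by
    rw [shift_apply, inner_sub_right, inner_smul_right, inner_smul_left, RCLike.conj_conj]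
  ext v
  rw [Submodule.mem_orthogonal']
  constructor
  · intro hv
    have hadj (x : A.domain) : inner 𝕜 (starRingEnd 𝕜 z • v) (x : E) = inner 𝕜 v (A x) := by
      rw [eq_comm, ← sub_eq_zero, ← inner_shift]
      exact hv _ ⟨x, rfl⟩
    have hvdom := LinearPMap.mem_adjoint_domain_of_exists v ⟨_, hadj⟩
    exact ⟨⟨v, hvdom⟩, mem_ker_shift.2 (LinearPMap.adjoint_apply_eq hA ⟨v, hvdom⟩ hadj), rfl⟩
  · rintro ⟨w, hw, rfl⟩ _ ⟨x, rfl⟩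
    rw [Submodule.subtype_apply, inner_shift, ← mem_ker_shift.1 hw,
      LinearPMap.adjoint_isFormalAdjoint hA w x, sub_self]

end ShiftRange

section FormalAdjoint

variable {𝕜 E F : Type*} [RCLike 𝕜] [NormedAddCommGroup E] [InnerProductSpace 𝕜 E]

theorem isFormalAdjoint_of_le_left [NormedAddCommGroup F] [InnerProductSpace 𝕜 F]
    {A B : E →ₗ.[𝕜] F} {C : F →ₗ.[𝕜] E} (hAB : A ≤ B) (hBC : B.IsFormalAdjoint C) :
    A.IsFormalAdjoint C := fun x y => by
  rw [LinearPMap.apply_comp_inclusion hAB]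
  exact hBC _ y

theorem isFormalAdjoint_self_of_isSelfAdjoint [CompleteSpace E] {T : E →ₗ.[𝕜] E}
    (hT : IsSelfAdjoint T) : T.IsFormalAdjoint T := by
  have hadj := LinearPMap.adjoint_isFormalAdjoint hT.dense_domain
  rwa [LinearPMap.isSelfAdjoint_def.1 hT] at hadj

end FormalAdjoint

section NonrealShift

variable {E : Type*} [NormedAddCommGroup E] [InnerProductSpace ℂ E]

theorem abs_im_mul_norm_le_norm_shift {A : E →ₗ.[ℂ] E} (hA : A.IsFormalAdjoint A) (z : ℂ)
    (x : A.domain) : |z.im| * ‖(x : E)‖ ≤ ‖shift A z x‖ := by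
  have him : ⟪(x : E), A x⟫.im = 0 := by
    rw [← Complex.conj_eq_iff_im, inner_conj_symm, hA x x]
  have him_shift : ⟪(x : E), shift A z x⟫.im = -(z.im * ‖(x : E)‖ ^ 2) := by
    rw [shift_apply, inner_sub_right, inner_smul_right, inner_self_eq_norm_sq_to_K,
      ← RCLike.ofReal_pow, Complex.sub_im, him, zero_sub, RCLike.ofReal_eq_complex_ofReal,
      Complex.im_mul_ofReal]
  have key : |z.im| * ‖(x : E)‖ * ‖(x : E)‖ ≤ ‖shift A z x‖ * ‖(x : E)‖ :=
    calc |z.im| * ‖(x : E)‖ * ‖(x : E)‖ = |⟪(x : E), shift A z x⟫.im| := by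
          rw [him_shift, abs_neg, abs_mul, abs_sq, pow_two, mul_assoc]
      _ ≤ ‖⟪(x : E), shift A z x⟫‖ := Complex.abs_im_le_norm _
      _ ≤ ‖shift A z x‖ * ‖(x : E)‖ := (norm_inner_le_norm _ _).trans_eq (mul_comm _ _)
  rcases (norm_nonneg (x : E)).eq_or_lt with hx | hx
  · rw [← hx, mul_zero]
    exact norm_nonneg _
  · exact le_of_mul_le_mul_right key hx

theorem norm_le_inv_abs_im_mul_norm_shift {A : E →ₗ.[ℂ] E} (hA : A.IsFormalAdjoint A) {z : ℂ}
    (hz : z.im ≠ 0) (x : A.domain) : ‖(x : E)‖ ≤ |z.im|⁻¹ * ‖shift A z x‖ :=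
  (le_inv_mul_iff₀ (abs_pos.2 hz)).2 (abs_im_mul_norm_le_norm_shift hA z x)

theorem ker_shift_eq_bot {A : E →ₗ.[ℂ] E} (hA : A.IsFormalAdjoint A) {z : ℂ} (hz : z.im ≠ 0) :
    LinearMap.ker (shift A z) = ⊥ := by
  refine LinearMap.ker_eq_bot'.2 fun x hx => ?_
  have hnorm := norm_le_inv_abs_im_mul_norm_shift hA hz x
  rw [hx, norm_zero, mul_zero] at hnorm
  exact Subtype.ext (norm_le_zero_iff.1 hnorm)

theorem shift_surjective [CompleteSpace E] {T : E →ₗ.[ℂ] E} (hT : IsSelfAdjoint T) {z : ℂ}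
    (hz : z.im ≠ 0) : Function.Surjective (shift T z) := by
  have hsymm := isFormalAdjoint_self_of_isSelfAdjoint hT
  have : CompleteSpace (LinearMap.range (shift T z)) := IsClosed.completeSpace_coe
    (hs := isClosed_range_shift hT.isClosed (norm_le_inv_abs_im_mul_norm_shift hsymm hz))
  have hz_conj : (starRingEnd ℂ z).im ≠ 0 := by rwa [Complex.conj_im, neg_ne_zero]
  rw [← LinearMap.range_eq_top, ← Submodule.orthogonal_eq_bot_iff,
    orthogonal_range_shift hT.dense_domain, LinearPMap.isSelfAdjoint_def.1 hT,
    ker_shift_eq_bot hsymm hz_conj, Submodule.map_bot]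

theorem exists_mem_domain_shift_eq [CompleteSpace E] {T T₁ : E →ₗ.[ℂ] E} (hT : IsSelfAdjoint T)
    (hTT₁ : T ≤ T₁) {z : ℂ} (hz : z.im ≠ 0) (v : E) :
    ∃ y : T₁.domain, (y : E) ∈ T.domain ∧ shift T₁ z y = v := by
  obtain ⟨y, rfl⟩ := shift_surjective hT hz v
  exact ⟨Submodule.inclusion hTT₁.1 y, y.2, shift_apply_of_le hTT₁ z y⟩

theorem exists_mem_domain_sub_mem_defSpace [CompleteSpace E] {T T₁ : E →ₗ.[ℂ] E}
    (hT : IsSelfAdjoint T) (hTT₁ : T ≤ T₁) {c : ℂ} (hc : c.im ≠ 0) (x : T₁.domain) :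
    ∃ y : T₁.domain, (y : E) ∈ T.domain ∧ x - y ∈ defSpace T₁ c := by
  obtain ⟨y, hyT, hy⟩ := exists_mem_domain_shift_eq hT hTT₁ hc (shift T₁ c x)
  exact ⟨y, hyT, LinearMap.sub_mem_ker_iff.2 hy.symm⟩

end NonrealShift

section SympForm

variable {E : Type*} [NormedAddCommGroup E] [InnerProductSpace ℂ E] {T₀ T T₁ : E →ₗ.[ℂ] E} {c : ℂ}

theorem sympForm_sub_left (x y w : T₁.domain) :
    sympForm T₁ (x - y) w = sympForm T₁ x w - sympForm T₁ y w := by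
  simp only [sympForm, LinearPMap.map_sub, Submodule.coe_sub, inner_sub_left]
  ring

theorem sympForm_eq_zero_of_isFormalAdjoint {A B : E →ₗ.[ℂ] E} (hAB : A.IsFormalAdjoint B)
    (hA : A ≤ T₁) (hB : B ≤ T₁) {x y : T₁.domain} (hx : (x : E) ∈ A.domain)
    (hy : (y : E) ∈ B.domain) : sympForm T₁ x y = 0 := by
  rw [sympForm, ← hA.2 (x := ⟨x, hx⟩) rfl, ← hB.2 (x := ⟨y, hy⟩) rfl, sub_eq_zero]
  exact hAB ⟨x, hx⟩ ⟨y, hy⟩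

theorem sympForm_of_mem_defSpace {u : T₁.domain} (hu : u ∈ defSpace T₁ c) (y : T₁.domain) :
    sympForm T₁ u y = -⟪(u : E), shift T₁ (starRingEnd ℂ c) y⟫ := by
  rw [sympForm, mem_ker_shift.1 hu, shift_apply, inner_smul_left, inner_sub_right,
    inner_smul_right, neg_sub]

theorem eq_zero_of_mem_defSpace_of_shift_eq (hle : T₀ ≤ T₁) (hadj : T₁.IsFormalAdjoint T₀)
    {u s : T₁.domain} (hu : u ∈ defSpace T₁ c) (hs : (s : E) ∈ T₀.domain)
    (hsu : shift T₁ (starRingEnd ℂ c) s = u) : u = 0 := by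
  have hpair := sympForm_of_mem_defSpace hu s
  rw [sympForm_eq_zero_of_isFormalAdjoint hadj le_rfl hle u.2 hs, hsu, eq_comm,
    neg_eq_zero] at hpair
  exact Subtype.ext (inner_self_eq_zero.1 hpair)

variable {ι : Type*} {b : ι → defSpace T₁ c} {t : ι → T₁.domain}

theorem eq_zero_of_sum_smul_mem_domain [Fintype ι] (hle : T₀ ≤ T₁)
    (hadj : T₁.IsFormalAdjoint T₀) (hb : LinearIndependent ℂ b)
    (ht : ∀ j, shift T₁ (starRingEnd ℂ c) (t j) = (b j : T₁.domain)) {α : ι → ℂ}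
    (hα : ((∑ j, α j • t j : T₁.domain) : E) ∈ T₀.domain) (j : ι) : α j = 0 := by
  refine Fintype.linearIndependent_iff.1 hb α (Subtype.ext ?_) j
  refine eq_zero_of_mem_defSpace_of_shift_eq hle hadj (∑ j, α j • b j).2 hα ?_
  simp only [map_sum, map_smul, ht, Submodule.coe_sum, Submodule.coe_smul]

theorem eq_zero_of_mem_defSpace_of_sympForm_eq_zero (hb : Submodule.span ℂ (Set.range b) = ⊤)
    (ht : ∀ j, shift T₁ (starRingEnd ℂ c) (t j) = (b j : T₁.domain)) {u : T₁.domain}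
    (hu : u ∈ defSpace T₁ c) (hut : ∀ j, sympForm T₁ u (t j) = 0) : u = 0 := by
  have inner_b (j : ι) : ⟪(u : E), (b j : T₁.domain)⟫ = 0 := by
    rw [← ht, ← neg_eq_zero, ← sympForm_of_mem_defSpace hu, hut]
  have span_le : Submodule.span ℂ (Set.range b) ≤
      LinearMap.ker (innerₛₗ ℂ (⟨u, hu⟩ : defSpace T₁ c)) :=
    Submodule.span_le.2 (Set.range_subset_iff.2 inner_b)
  have inner_self : ⟪(u : E), u⟫ = 0 := span_le (hb ▸ Submodule.mem_top : ⟨u, hu⟩ ∈ _)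
  exact Subtype.ext (inner_self_eq_zero.1 inner_self)

theorem mem_domain_iff_forall_sympForm_eq_zero [CompleteSpace E] (hT : IsSelfAdjoint T)
    (hTT₁ : T ≤ T₁) (hc : c.im ≠ 0) (hb : Submodule.span ℂ (Set.range b) = ⊤)
    (htT : ∀ j, (t j : E) ∈ T.domain)
    (ht : ∀ j, shift T₁ (starRingEnd ℂ c) (t j) = (b j : T₁.domain)) (x : T₁.domain) :
    (x : E) ∈ T.domain ↔ ∀ j, sympForm T₁ x (t j) = 0 := by
  have sympForm_T {y : T₁.domain} (hy : (y : E) ∈ T.domain) (j : ι) : sympForm T₁ y (t j) = 0 :=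
    sympForm_eq_zero_of_isFormalAdjoint (isFormalAdjoint_self_of_isSelfAdjoint hT) hTT₁ hTT₁ hy
      (htT j)
  refine ⟨sympForm_T, fun hx => ?_⟩
  obtain ⟨y, hyT, hxy⟩ := exists_mem_domain_sub_mem_defSpace hT hTT₁ hc x
  have hxy_zero : x - y = 0 := eq_zero_of_mem_defSpace_of_sympForm_eq_zero hb ht hxy fun j => by
    rw [sympForm_sub_left, hx, sympForm_T hyT, sub_zero]
  rwa [sub_eq_zero.1 hxy_zero]

end SympForm

theorem selfAdjoint_extension_is_GKN_restriction_general
    (T₀ : H →ₗ.[ℂ] H) (hdense : Dense (T₀.domain : Set H))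
    [FiniteDimensional ℂ (defSpace T₀.adjoint Complex.I)]
    (T : H →ₗ.[ℂ] H) (hT : IsSelfAdjoint T) (hT₀T : T₀ ≤ T) :
    ∃ t : Fin (defIndex T₀.adjoint) → T₀.adjoint.domain, IsGKNFamily T₀ T₀.adjoint t ∧
      (T.domain : Set H) =
        Subtype.val '' {x : T₀.adjoint.domain | ∀ j, sympForm T₀.adjoint x (t j) = 0} := by
  have hsymm : T.IsFormalAdjoint T := isFormalAdjoint_self_of_isSelfAdjoint hT
  have hTT₁ : T ≤ T₀.adjoint := (isFormalAdjoint_of_le_left hT₀T hsymm).le_adjoint hdense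
  let b := Module.finBasis ℂ (defSpace T₀.adjoint Complex.I)
  have hI : Complex.I.im ≠ 0 := by simp
  have hI_conj : (starRingEnd ℂ Complex.I).im ≠ 0 := by simp
  choose t htT ht using fun j =>
    exists_mem_domain_shift_eq hT hTT₁ hI_conj ((b j : T₀.adjoint.domain) : H)
  have hmem := mem_domain_iff_forall_sympForm_eq_zero hT hTT₁ hI b.span_eq htT ht
  refine ⟨t, ⟨fun α hα => ?_, fun i j => (hmem (t i)).1 (htT i) j⟩, ?_⟩
  · exact eq_zero_of_sum_smul_mem_domain (hT₀T.trans hTT₁)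
      (LinearPMap.adjoint_isFormalAdjoint hdense) b.linearIndependent ht hα
  · ext x
    constructor
    · intro hx
      exact ⟨⟨x, hTT₁.1 hx⟩, (hmem _).1 hx, rfl⟩
    · rintro ⟨x, hx, rfl⟩
      exact (hmem x).2 hx

/-!
STATEMENT 8 (GKN-EM, necessity): if `T` is self-adjoint with `T₀ ⊆ T ⊆ T₁`, then there
is a GKN set `t₁,…,t_m` for `T₀` (`m = def(T₀)`) with
`D(T) = {x ∈ D(T₁) : [x,tⱼ]_H = 0, j = 1,…,m}`.
-/
theorem selfAdjoint_extension_is_GKN_restriction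
    (T₀ T₁ : H →ₗ.[ℂ] H)
    (hdense : Dense (T₀.domain : Set H))
    (hsymm : T₀.IsFormalAdjoint T₀)
    (hclosed : T₀.IsClosed)
    (hT₁ : T₁ = T₀.adjoint)
    (hT₁adj : T₁.adjoint = T₀)
    (hle : T₀ ≤ T₁)
    [FiniteDimensional ℂ (defSpace T₁ Complex.I)]
    [FiniteDimensional ℂ (defSpace T₁ (-Complex.I))]
    (hpos : 1 ≤ defIndex T₁)
    (heq : Module.finrank ℂ (defSpace T₁ Complex.I)
         = Module.finrank ℂ (defSpace T₁ (-Complex.I)))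
    (T : H →ₗ.[ℂ] H)
    (hTsa : T.adjoint = T)
    (hT₀T : T₀ ≤ T) (hTT₁ : T ≤ T₁) :
    ∃ t : Fin (defIndex T₁) → T₁.domain, IsGKNFamily T₀ T₁ t ∧
      (T.domain : Set H) =
        Subtype.val '' {x : T₁.domain | ∀ j, sympForm T₁ x (t j) = 0} := by
  subst hT₁
  exact selfAdjoint_extension_is_GKN_restriction_general T₀ hdense T hTsa hT₀T
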